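/- Let f be a strictly convex standard self-concordant function on ℝⁿ, x a point, Q the truncated approximation of A := ∇²f(x) with parameter N, λ̄ := (∇f(x)ᵀ Q⁻¹ ∇f(x))^{1/2} and d̂ := −Q⁻¹ ∇f(x). If t > 0 satisfies t λ̄ < 1 and x⁺ := x + t d̂, then (i) ∇²f(x⁺) ⪯ (1 − t λ̄)⁻² ∇²f(x), and (ii) [∇²f(x⁺)]⁻¹ ⪯ (1 − t λ̄)⁻² [∇²f(x)]⁻¹ (in the Loewner order on symmetric matrices). -/

import Mathlib

open Matrix

/-- A binary cubic form bounded by `M` on the unit circle has its polarization at `e₁, e₁, (p, q)`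
bounded by `M * ‖(p, q)‖`.  The proof is an explicit cubature formula whose nodes are the three
trisections of the angle of `(p, q)`. -/
theorem abs_polarization_le_of_cubic_le {A B C D M : ℝ}
    (h : ∀ c s : ℝ, c ^ 2 + s ^ 2 = 1 →
      |A * c ^ 3 + 3 * B * c ^ 2 * s + 3 * C * c * s ^ 2 + D * s ^ 3| ≤ M) (p q : ℝ) :
    |A * p + B * q| ≤ M * √(p ^ 2 + q ^ 2) := by
  obtain ⟨ρ, θ, hρ, hp, hq, hn⟩ : ∃ ρ θ : ℝ, 0 ≤ ρ ∧ p = ρ * Real.cos (3 * θ) ∧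
      q = ρ * Real.sin (3 * θ) ∧ √(p ^ 2 + q ^ 2) = ρ := by
    refine ⟨‖(⟨p, q⟩ : ℂ)‖, Complex.arg ⟨p, q⟩ / 3, norm_nonneg _, ?_, ?_, ?_⟩
    · rw [mul_div_cancel₀ _ (by norm_num : (3 : ℝ) ≠ 0), Complex.norm_mul_cos_arg]
    · rw [mul_div_cancel₀ _ (by norm_num : (3 : ℝ) ≠ 0), Complex.norm_mul_sin_arg]
    · rw [Complex.norm_eq_sqrt_sq_add_sq]
  obtain ⟨r, hr0, hr⟩ : ∃ r : ℝ, r ≠ 0 ∧ r ^ 2 = 3 :=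
    ⟨√3, by positivity, Real.sq_sqrt (by norm_num)⟩
  obtain ⟨y, hy⟩ : ∃ y : ℝ, Real.sin θ = r * y := ⟨Real.sin θ / r, by field_simp⟩
  have hxy := Real.cos_sq_add_sin_sq θ
  rw [Real.cos_three_mul] at hp
  rw [Real.sin_three_mul] at hq
  rw [hn, hp, hq]
  rw [hy] at *
  generalize Real.cos θ = x at *
  have hxy' : x ^ 2 + 3 * y ^ 2 = 1 := by linear_combination hxy - y ^ 2 * hr
  have key : ∀ x y : ℝ, x ^ 2 + 3 * y ^ 2 = 1 →
      |A * x ^ 3 + 3 * (r * B) * x ^ 2 * y + 9 * C * x * y ^ 2 + 3 * (r * D) * y ^ 3| ≤ M := by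
    intro x y hxy
    convert h x (r * y) (by linear_combination hxy + y ^ 2 * hr) using 2
    linear_combination (-3 * C * x * y ^ 2 - r * D * y ^ 3) * hr
  have h0 := abs_le.1 (key x y hxy')
  have h1 := abs_le.1 (key (-(x + 3 * y) / 2) ((x - y) / 2) (by linear_combination hxy'))
  have h2 := abs_le.1 (key (-(x - 3 * y) / 2) (-(x + y) / 2) (by linear_combination hxy'))
  set p0 := A * x ^ 3 + 3 * (r * B) * x ^ 2 * y + 9 * C * x * y ^ 2 + 3 * (r * D) * y ^ 3 with hp0
  set p1 := A * (-(x + 3 * y) / 2) ^ 3 + 3 * (r * B) * (-(x + 3 * y) / 2) ^ 2 * ((x - y) / 2)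
    + 9 * C * (-(x + 3 * y) / 2) * ((x - y) / 2) ^ 2 + 3 * (r * D) * ((x - y) / 2) ^ 3 with hp1
  set p2 := A * (-(x - 3 * y) / 2) ^ 3 + 3 * (r * B) * (-(x - 3 * y) / 2) ^ 2 * (-(x + y) / 2)
    + 9 * C * (-(x - 3 * y) / 2) * (-(x + y) / 2) ^ 2 + 3 * (r * D) * (-(x + y) / 2) ^ 3 with hp2
  have hw : (x ^ 2 - y ^ 2) ^ 2 + (2 * y * (x + y)) ^ 2 + (2 * y * (y - x)) ^ 2 = 1 := by
    linear_combination (x ^ 2 + 3 * y ^ 2 + 1) * hxy'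
  have hrep : A * (x ^ 3 - 9 * x * y ^ 2) + r * B * (3 * x ^ 2 * y - 3 * y ^ 3) =
      (x ^ 2 - y ^ 2) ^ 2 * p0 + (2 * y * (x + y)) ^ 2 * p1 + (2 * y * (y - x)) ^ 2 * p2 := by
    have : (A * (x ^ 3 - 9 * x * y ^ 2) + r * B * (3 * x ^ 2 * y - 3 * y ^ 3))
        * (x ^ 2 + 3 * y ^ 2) ^ 2 =
      (x ^ 2 - y ^ 2) ^ 2 * p0 + (2 * y * (x + y)) ^ 2 * p1 + (2 * y * (y - x)) ^ 2 * p2 := by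
      rw [hp0, hp1, hp2]; ring
    rw [hxy'] at this
    linear_combination this
  have hlhs : A * (ρ * (4 * x ^ 3 - 3 * x)) + B * (ρ * (3 * (r * y) - 4 * (r * y) ^ 3)) =
      ρ * (A * (x ^ 3 - 9 * x * y ^ 2) + r * B * (3 * x ^ 2 * y - 3 * y ^ 3)) := by
    linear_combination (ρ * A * 3 * x - ρ * B * 3 * r * y) * hxy' - 4 * B * ρ * r * y ^ 3 * hr
  rw [hlhs, abs_mul, abs_of_nonneg hρ, mul_comm M]
  refine mul_le_mul_of_nonneg_left ?_ hρ
  rw [hrep, abs_le]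
  have w0 := sq_nonneg (x ^ 2 - y ^ 2)
  have w1 := sq_nonneg (2 * y * (x + y))
  have w2 := sq_nonneg (2 * y * (y - x))
  clear_value p0 p1 p2
  constructor
  · linear_combination (x ^ 2 - y ^ 2) ^ 2 * h0.1 + (2 * y * (x + y)) ^ 2 * h1.1
      + (2 * y * (y - x)) ^ 2 * h2.1 + M * hw
  · linear_combination (x ^ 2 - y ^ 2) ^ 2 * h0.2 + (2 * y * (x + y)) ^ 2 * h1.2
      + (2 * y * (y - x)) ^ 2 * h2.2 + M * hw

section
variable {E : Type*} [NormedAddCommGroup E] [NormedSpace ℝ E]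

/-- A symmetric trilinear form bounded on the diagonal by `M * ‖v‖ ^ 3`, for the norm of an inner
product `H`, satisfies `|T b a a| ≤ M * ‖b‖ * ‖a‖ ^ 2`. -/
theorem abs_trilinear_le (H : E →L[ℝ] E →L[ℝ] ℝ) (T : E →L[ℝ] E →L[ℝ] E →L[ℝ] ℝ)
    (hH : ∀ v w, H v w = H w v) (hpos : ∀ v, v ≠ 0 → 0 < H v v)
    (hT₁ : ∀ u v w, T u v w = T v u w) (hT₂ : ∀ u v w, T u v w = T u w v) {M : ℝ} (hM : 0 ≤ M)
    (hT : ∀ v, |T v v v| ≤ M * √(H v v) ^ 3) (a b : E) :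
    |T b a a| ≤ M * √(H b b) * H a a := by
  rcases eq_or_ne a 0 with rfl | ha
  · simp
  have haa := hpos a ha
  obtain ⟨α, hα, hα2⟩ : ∃ α : ℝ, 0 < α ∧ H a a = α ^ 2 :=
    ⟨√(H a a), Real.sqrt_pos.2 haa, (Real.sq_sqrt haa.le).symm⟩
  obtain ⟨k, w, hb, haw⟩ : ∃ (k : ℝ) (w : E), b = k • a + w ∧ H a w = 0 := by
    refine ⟨H a b / H a a, b - (H a b / H a a) • a, by abel, ?_⟩
    simp [haa.ne']
  obtain ⟨ω, e, hwe, hee, hae⟩ : ∃ (ω : ℝ) (e : E), w = ω • e ∧ H e e ≤ 1 ∧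
      H a e = 0 ∧ H w w = ω ^ 2 := by
    rcases eq_or_ne w 0 with rfl | hw
    · exact ⟨0, 0, by simp⟩
    have hww := hpos w hw
    have hs := Real.sqrt_pos.2 hww
    have hs2 := Real.sq_sqrt hww.le
    refine ⟨√(H w w), (√(H w w))⁻¹ • w, by rw [smul_inv_smul₀ hs.ne'], ?_, by simp [haw], hs2.symm⟩
    simp only [map_smul, _root_.smul_apply, smul_eq_mul]
    field_simp
    exact hs2.ge
  have hcub : ∀ c s : ℝ, c ^ 2 + s ^ 2 = 1 →
      |T a a a / α ^ 3 * c ^ 3 + 3 * (T a a e / α ^ 2) * c ^ 2 * s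
        + 3 * (T a e e / α) * c * s ^ 2 + T e e e * s ^ 3| ≤ M := by
    intro c s hcs
    have h := hT ((c / α) • a + s • e)
    have h1 : √(H ((c / α) • a + s • e) ((c / α) • a + s • e)) ≤ 1 := by
      refine Real.sqrt_le_iff.2 ⟨zero_le_one, ?_⟩
      simp only [map_add, map_smul, _root_.add_apply, _root_.smul_apply,
        smul_eq_mul, hH e a, hae.1, hα2]
      have : c / α * (c / α * α ^ 2) = c ^ 2 := by field_simp
      nlinarith [mul_le_mul_of_nonneg_left hee (sq_nonneg s)]
    have h2 : M * √(H ((c / α) • a + s • e) ((c / α) • a + s • e)) ^ 3 ≤ M :=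
      mul_le_of_le_one_right hM (pow_le_one₀ (Real.sqrt_nonneg _) h1)
    refine le_trans (le_of_eq ?_) (h.trans h2)
    congr 1
    simp only [map_add, map_smul, _root_.add_apply, _root_.smul_apply,
      smul_eq_mul, hT₂ a e a, hT₁ e a a, hT₂ e e a, hT₁ e a e]
    field_simp
    ring
  have hfin := abs_polarization_le_of_cubic_le hcub (k * α) ω
  have hbb : H b b = (k * α) ^ 2 + ω ^ 2 := by
    rw [hb]
    simp only [map_add, map_smul, _root_.add_apply, _root_.smul_apply,
      smul_eq_mul, hH w a, haw, hα2, hae.2]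
    ring
  have hTb : T b a a = α ^ 2 * (T a a a / α ^ 3 * (k * α) + T a a e / α ^ 2 * ω) := by
    rw [hb, hwe]
    simp only [map_add, map_smul, _root_.add_apply, _root_.smul_apply,
      smul_eq_mul, hT₁ e a a, hT₂ a e a]
    field_simp
  rw [hTb, hbb, hα2, abs_mul, abs_of_nonneg (sq_nonneg α), mul_comm]
  exact mul_le_mul_of_nonneg_right hfin (sq_nonneg α)

theorem hasDerivAt_add_smul (x u : E) (t : ℝ) : HasDerivAt (fun s : ℝ => x + s • u) u t := by
  simpa using ((hasDerivAt_id t).smul_const u).const_add x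

theorem hasDerivAt_fderiv_fderiv_line {f : E → ℝ} (hf : ContDiff ℝ 3 f) (x d v w : E) (t : ℝ) :
    HasDerivAt (fun s : ℝ => fderiv ℝ (fderiv ℝ f) (x + s • d) v w)
      (fderiv ℝ (fderiv ℝ (fderiv ℝ f)) (x + t • d) d v w) t := by
  have h1 : ContDiff ℝ 2 (fderiv ℝ f) := hf.fderiv_right (by norm_num)
  have h2 : ContDiff ℝ 1 (fderiv ℝ (fderiv ℝ f)) := h1.fderiv_right (by norm_num)
  have h := ((h2.differentiable (by norm_num)) (x + t • d)).hasFDerivAt.comp_hasDerivAt t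
    (hasDerivAt_add_smul x d t)
  have h' := (h.clm_apply (hasDerivAt_const t v)).clm_apply (hasDerivAt_const t w)
  simpa using h'

theorem iteratedDeriv_two_line {f : E → ℝ} (hf : ContDiff ℝ 3 f) (x u : E) :
    iteratedDeriv 2 (fun t : ℝ => f (x + t • u)) =
      fun t => fderiv ℝ (fderiv ℝ f) (x + t • u) u u := by
  have h1 : ContDiff ℝ 2 (fderiv ℝ f) := hf.fderiv_right (by norm_num)
  have e1 : deriv (fun t : ℝ => f (x + t • u)) = fun t => fderiv ℝ f (x + t • u) u := by
    funext t
    exact (((hf.differentiable (by norm_num)) (x + t • u)).hasFDerivAt.comp_hasDerivAt t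
      (hasDerivAt_add_smul x u t)).deriv
  rw [iteratedDeriv_succ, iteratedDeriv_one, e1]
  funext t
  have h := ((h1.differentiable (by norm_num)) (x + t • u)).hasFDerivAt.comp_hasDerivAt t
    (hasDerivAt_add_smul x u t)
  have h' := h.clm_apply (hasDerivAt_const t u)
  simpa using h'.deriv

theorem iteratedDeriv_three_line {f : E → ℝ} (hf : ContDiff ℝ 3 f) (x u : E) :
    iteratedDeriv 3 (fun t : ℝ => f (x + t • u)) =
      fun t => fderiv ℝ (fderiv ℝ (fderiv ℝ f)) (x + t • u) u u u := by
  rw [iteratedDeriv_succ, iteratedDeriv_two_line hf]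
  funext t
  exact (hasDerivAt_fderiv_fderiv_line hf x u u u t).deriv

theorem fderiv_fderiv_symm {f : E → ℝ} (hf : ContDiff ℝ 3 f) (x u v : E) :
    fderiv ℝ (fderiv ℝ f) x u v = fderiv ℝ (fderiv ℝ f) x v u :=
  (hf.contDiffAt.isSymmSndFDerivAt (by simp; norm_num)) u v

theorem fderiv_fderiv_fderiv_symm_left {f : E → ℝ} (hf : ContDiff ℝ 3 f) (x u v w : E) :
    fderiv ℝ (fderiv ℝ (fderiv ℝ f)) x u v w = fderiv ℝ (fderiv ℝ (fderiv ℝ f)) x v u w := by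
  have h1 : ContDiff ℝ 2 (fderiv ℝ f) := hf.fderiv_right (by norm_num)
  exact DFunLike.congr_fun ((h1.contDiffAt.isSymmSndFDerivAt (by simp)) u v) w

theorem fderiv_fderiv_fderiv_symm_right {f : E → ℝ} (hf : ContDiff ℝ 3 f) (x u v w : E) :
    fderiv ℝ (fderiv ℝ (fderiv ℝ f)) x u v w = fderiv ℝ (fderiv ℝ (fderiv ℝ f)) x u w v := by
  have h1 := hasDerivAt_fderiv_fderiv_line hf x u v w 0
  have h2 := hasDerivAt_fderiv_fderiv_line hf x u w v 0
  simp only [fderiv_fderiv_symm hf _ v w] at h1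
  simpa using h1.unique h2

end

theorem sqrt_mul_one_sub_le {φ φ' : ℝ → ℝ} (hφ : ∀ s, 0 < φ s)
    (hd : ∀ s, HasDerivAt φ (φ' s) s) (hb : ∀ s, |φ' s| ≤ 2 * √(φ s) ^ 3) {s : ℝ} (hs : 0 ≤ s) :
    √(φ s) * (1 - s * √(φ 0)) ≤ √(φ 0) := by
  have hpos : ∀ s, 0 < √(φ s) := fun s => Real.sqrt_pos.2 (hφ s)
  have hmono : Monotone fun s => (√(φ s))⁻¹ + s := by
    refine monotone_of_hasDerivAt_nonneg
      (f' := fun s => -(φ' s / (2 * √(φ s))) / √(φ s) ^ 2 + 1)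
      (fun s => (((hd s).sqrt (hφ s).ne').fun_inv (hpos s).ne').add (hasDerivAt_id s)) ?_
    intro s
    have h1 := hpos s
    have h2 := (abs_le.1 (hb s)).2
    have : -(φ' s / (2 * √(φ s))) / √(φ s) ^ 2 + 1 =
        (2 * √(φ s) ^ 3 - φ' s) / (2 * √(φ s) ^ 3) := by
      field_simp
      ring
    simp only [Pi.zero_apply, this]
    exact div_nonneg (by linarith) (by positivity)
  have h := hmono hs
  simp only [add_zero] at h
  have h0 := hpos 0
  have h1 := hpos s
  have h2 := mul_le_mul_of_nonneg_left h (mul_pos h0 h1).le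
  have e1 : √(φ 0) * √(φ s) * (√(φ 0))⁻¹ = √(φ s) := by field_simp
  have e2 : √(φ 0) * √(φ s) * ((√(φ s))⁻¹ + s) = √(φ 0) + √(φ 0) * √(φ s) * s := by field_simp
  rw [e1, e2] at h2
  linarith

theorem one_sub_sq_bounds {h h' ψ : ℝ → ℝ} {r t : ℝ} (ht : 0 ≤ t) (hr : 0 ≤ r)
    (htr : t * r < 1) (hpos : ∀ s, 0 ≤ h s) (hd : ∀ s, HasDerivAt h (h' s) s)
    (hb : ∀ s, |h' s| ≤ 2 * ψ s * h s) (hψ : ∀ s, 0 ≤ s → ψ s * (1 - s * r) ≤ r) :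
    h t * (1 - t * r) ^ 2 ≤ h 0 ∧ (1 - t * r) ^ 2 * h 0 ≤ h t := by
  have hlt : ∀ s ∈ Set.Icc 0 t, 0 < 1 - s * r := fun s hs => by
    nlinarith [mul_le_mul_of_nonneg_right hs.2 hr]
  have hbd : ∀ s ∈ Set.Icc 0 t, |h' s| * (1 - s * r) ≤ 2 * r * h s := fun s hs => by
    have h1 := mul_le_mul_of_nonneg_right (hb s) (hlt s hs).le
    have h2 := mul_le_mul_of_nonneg_right (hψ s hs.1) (hpos s)
    linarith
  have hl : ∀ s, HasDerivAt (fun s : ℝ => 1 - s * r) (-r) s := fun s => by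
    simpa using ((hasDerivAt_id s).mul_const r).const_sub 1
  have hl2 : ∀ s, HasDerivAt (fun s : ℝ => (1 - s * r) ^ 2) (2 * (1 - s * r) * -r) s := fun s => by
    simpa using (hl s).fun_pow 2
  have h0t : (0 : ℝ) ∈ Set.Icc 0 t := ⟨le_rfl, ht⟩
  have htt : t ∈ Set.Icc 0 t := ⟨ht, le_rfl⟩
  constructor
  · have hA : ∀ s, HasDerivAt (fun s => h s * (1 - s * r) ^ 2)
        (h' s * (1 - s * r) ^ 2 + h s * (2 * (1 - s * r) * -r)) s := fun s => (hd s).fun_mul (hl2 s)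
    have hanti : AntitoneOn (fun s => h s * (1 - s * r) ^ 2) (Set.Icc 0 t) := by
      refine antitoneOn_of_deriv_nonpos (convex_Icc 0 t)
        (fun s _ => (hA s).continuousAt.continuousWithinAt)
        (fun s _ => (hA s).differentiableAt.differentiableWithinAt) fun s hs => ?_
      have hs := interior_subset hs
      rw [(hA s).deriv]
      have h1 := hlt s hs
      have h2 : h' s * (1 - s * r) ≤ 2 * r * h s :=
        (mul_le_mul_of_nonneg_right (le_abs_self _) h1.le).trans (hbd s hs)
      nlinarith [mul_le_mul_of_nonneg_right h2 h1.le]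
    simpa using hanti h0t htt ht
  · have hA : ∀ s ∈ Set.Icc 0 t, HasDerivAt (fun s => h s / (1 - s * r) ^ 2)
        ((h' s * (1 - s * r) ^ 2 - h s * (2 * (1 - s * r) * -r)) / ((1 - s * r) ^ 2) ^ 2) s :=
      fun s hs => (hd s).fun_div (hl2 s) (pow_pos (hlt s hs) 2).ne'
    have hmono : MonotoneOn (fun s => h s / (1 - s * r) ^ 2) (Set.Icc 0 t) := by
      refine monotoneOn_of_deriv_nonneg (convex_Icc 0 t)
        (fun s hs => (hA s hs).continuousAt.continuousWithinAt)
        (fun s hs => (hA s (interior_subset hs)).differentiableAt.differentiableWithinAt)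
        fun s hs => ?_
      have hs := interior_subset hs
      rw [(hA s hs).deriv]
      have h1 := hlt s hs
      have h2 : -h' s * (1 - s * r) ≤ 2 * r * h s :=
        (mul_le_mul_of_nonneg_right (neg_le_abs _) h1.le).trans (hbd s hs)
      refine div_nonneg ?_ (by positivity)
      nlinarith [mul_le_mul_of_nonneg_right h2 h1.le]
    have h1 := hmono h0t htt ht
    simp only [zero_mul, sub_zero, one_pow, div_one] at h1
    rw [le_div_iff₀ (pow_pos (hlt t htt) 2)] at h1
    linarith

/-- Local comparison of the Hessians of a self-concordant function within the Dikin ellipsoid. -/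
theorem hessian_bounds_of_selfConcordant {E : Type*} [NormedAddCommGroup E] [NormedSpace ℝ E]
    {f : E → ℝ} (hf : ContDiff ℝ 3 f)
    (hpos : ∀ x v : E, v ≠ 0 → 0 < fderiv ℝ (fderiv ℝ f) x v v)
    (hsc : ∀ x v : E, |fderiv ℝ (fderiv ℝ (fderiv ℝ f)) x v v v| ≤
      2 * √(fderiv ℝ (fderiv ℝ f) x v v) ^ 3)
    (x d v : E) {t : ℝ} (ht : 0 ≤ t) (htr : t * √(fderiv ℝ (fderiv ℝ f) x d d) < 1) :
    fderiv ℝ (fderiv ℝ f) (x + t • d) v v * (1 - t * √(fderiv ℝ (fderiv ℝ f) x d d)) ^ 2 ≤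
        fderiv ℝ (fderiv ℝ f) x v v ∧
      (1 - t * √(fderiv ℝ (fderiv ℝ f) x d d)) ^ 2 * fderiv ℝ (fderiv ℝ f) x v v ≤
        fderiv ℝ (fderiv ℝ f) (x + t • d) v v := by
  rcases eq_or_ne d 0 with rfl | hd
  · simp
  have hnonneg : ∀ y v : E, 0 ≤ fderiv ℝ (fderiv ℝ f) y v v := fun y v => by
    rcases eq_or_ne v 0 with rfl | hv
    · simp
    · exact (hpos y v hv).le
  have hψ : ∀ s : ℝ, 0 ≤ s → √(fderiv ℝ (fderiv ℝ f) (x + s • d) d d) *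
      (1 - s * √(fderiv ℝ (fderiv ℝ f) x d d)) ≤ √(fderiv ℝ (fderiv ℝ f) x d d) := fun s hs => by
    simpa using sqrt_mul_one_sub_le (fun s => hpos (x + s • d) d hd)
      (fun s => hasDerivAt_fderiv_fderiv_line hf x d d d s) (fun s => hsc (x + s • d) d) hs
  simpa using one_sub_sq_bounds ht (Real.sqrt_nonneg _) htr (fun s => hnonneg (x + s • d) v)
    (fun s => hasDerivAt_fderiv_fderiv_line hf x d v v s)
    (fun s => abs_trilinear_le _ _ (fderiv_fderiv_symm hf _) (hpos _)
      (fderiv_fderiv_fderiv_symm_left hf _) (fderiv_fderiv_fderiv_symm_right hf _) zero_le_two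
      (hsc _) v d) hψ

section
variable {ι : Type*} [Fintype ι]

theorem posSemidef_sub_iff_dotProduct_le {A B : Matrix ι ι ℝ} (hA : A.IsSymm) (hB : B.IsSymm)
    (h : ∀ v : ι → ℝ, v ⬝ᵥ (A *ᵥ v) ≤ v ⬝ᵥ (B *ᵥ v)) : (B - A).PosSemidef := by
  refine PosSemidef.of_dotProduct_mulVec_nonneg ?_ fun v => ?_
  · simpa [IsHermitian] using (hB.sub hA).eq
  · simpa [sub_mulVec, dotProduct_sub] using h v

variable [DecidableEq ι]

/-- Quadratic-form version of the antitonicity of matrix inversion in the Loewner order. -/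
theorem dotProduct_inv_mulVec_le {A B : Matrix ι ι ℝ} (hA : A.PosDef) (hB : B.PosDef)
    (hAB : ∀ v : ι → ℝ, v ⬝ᵥ (A *ᵥ v) ≤ v ⬝ᵥ (B *ᵥ v)) (v : ι → ℝ) :
    v ⬝ᵥ (B⁻¹ *ᵥ v) ≤ v ⬝ᵥ (A⁻¹ *ᵥ v) := by
  have hBv : B *ᵥ (B⁻¹ *ᵥ v) = v := by
    rw [mulVec_mulVec, mul_nonsing_inv _ ((isUnit_iff_isUnit_det B).1 hB.isUnit), one_mulVec]
  have hAv : A *ᵥ (A⁻¹ *ᵥ v) = v := by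
    rw [mulVec_mulVec, mul_nonsing_inv _ ((isUnit_iff_isUnit_det A).1 hA.isUnit), one_mulVec]
  set w := B⁻¹ *ᵥ v
  set z := A⁻¹ *ᵥ v
  have h1 := hAB w
  rw [hBv] at h1
  have h2 : 0 ≤ (w - z) ⬝ᵥ (A *ᵥ (w - z)) := by
    simpa using hA.posSemidef.dotProduct_mulVec_nonneg (w - z)
  have h3 : z ⬝ᵥ (A *ᵥ w) = w ⬝ᵥ v := by
    have hs : Aᵀ = A := by simpa using hA.isHermitian.eq
    rw [dotProduct_mulVec, ← mulVec_transpose, hs, hAv, dotProduct_comm]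
  simp only [mulVec_sub, dotProduct_sub, sub_dotProduct, hAv, h3] at h2
  rw [dotProduct_comm v w, dotProduct_comm v z]
  linarith

theorem eq_transpose_mul_diagonal_mul {A : Matrix ι ι ℝ} {u : ι → ι → ℝ} {σ : ι → ℝ}
    (hu : ∀ i j, u i ⬝ᵥ u j = if i = j then (1 : ℝ) else 0)
    (hA : ∀ i, A *ᵥ u i = σ i • u i) :
    A = (Matrix.of u)ᵀ * diagonal σ * Matrix.of u := by
  have h1 : Matrix.of u * (Matrix.of u)ᵀ = 1 := by
    ext i j
    rw [mul_apply', one_apply, ← hu i j]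
    rfl
  have h2 : (Matrix.of u)ᵀ * Matrix.of u = 1 := mul_eq_one_comm.1 h1
  have h3 : A * (Matrix.of u)ᵀ = (Matrix.of u)ᵀ * diagonal σ := by
    ext i j
    rw [mul_diagonal, mul_comm]
    exact congrFun (hA j) i
  rw [← h3, Matrix.mul_assoc, h2, Matrix.mul_one]

theorem dotProduct_mulVec_eq_sum {A : Matrix ι ι ℝ} {u : ι → ι → ℝ} {σ : ι → ℝ}
    (hu : ∀ i j, u i ⬝ᵥ u j = if i = j then (1 : ℝ) else 0)
    (hA : ∀ i, A *ᵥ u i = σ i • u i) (v : ι → ℝ) :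
    v ⬝ᵥ (A *ᵥ v) = ∑ i, σ i * (u i ⬝ᵥ v) ^ 2 := by
  rw [eq_transpose_mul_diagonal_mul hu hA, ← mulVec_mulVec, ← mulVec_mulVec, dotProduct_mulVec,
    vecMul_transpose]
  simp only [dotProduct, mulVec_diagonal]
  refine Finset.sum_congr rfl fun i _ => ?_
  simp only [mulVec, dotProduct, of_apply]
  ring

end

/-- Let `f` be strictly convex standard self-concordant, `x`
a point, `Q` the truncated approximation of `∇²f(x)` with parameter `N`,
`λ̄ = (∇f(x)ᵀ Q⁻¹ ∇f(x))^{1/2}`, `d̂ = −Q⁻¹ ∇f(x)`.  If `t > 0` satisfies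
`t λ̄ < 1` and `x⁺ := x + t d̂`, then `∇²f(x⁺) ⪯ (1 − t λ̄)⁻² ∇²f(x)` and
`[∇²f(x⁺)]⁻¹ ⪯ (1 − t λ̄)⁻² [∇²f(x)]⁻¹` in the Loewner order. -/
theorem stmt11 {n N : ℕ} (hN : 1 ≤ N) (hNn : N < n)
    (f : (Fin n → ℝ) → ℝ) (grad : (Fin n → ℝ) → Fin n → ℝ)
    (hess : (Fin n → ℝ) → Matrix (Fin n) (Fin n) ℝ)
    (hf : ContDiff ℝ 3 f)
    (hconv : StrictConvexOn ℝ Set.univ f)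
    (hgrad : ∀ x u : Fin n → ℝ, deriv (fun t : ℝ => f (x + t • u)) 0 = grad x ⬝ᵥ u)
    (hhessq : ∀ x u : Fin n → ℝ,
      iteratedDeriv 2 (fun t : ℝ => f (x + t • u)) 0 = u ⬝ᵥ (hess x *ᵥ u))
    (hhsymm : ∀ x, (hess x).IsSymm)
    (hhpd : ∀ x, (hess x).PosDef)
    (hsc : ∀ x u : Fin n → ℝ, ∀ t : ℝ,
      |iteratedDeriv 3 (fun s : ℝ => f (x + s • u)) t|
        ≤ 2 * iteratedDeriv 2 (fun s : ℝ => f (x + s • u)) t ^ ((3 : ℝ) / 2))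
    (hclosed : ∀ c : ℝ, IsClosed {x | f x ≤ c})
    (hbdd : BddBelow (Set.range f))
    (x : Fin n → ℝ)
    (σ : Fin n → ℝ) (u : Fin n → Fin n → ℝ)
    (hσpos : ∀ i, 0 < σ i)
    (hσmono : ∀ i j : Fin n, i ≤ j → σ j ≤ σ i)
    (hortho : ∀ i j : Fin n, u i ⬝ᵥ u j = if i = j then (1 : ℝ) else 0)
    (heig : ∀ i, hess x *ᵥ u i = σ i • u i)
    (Q : Matrix (Fin n) (Fin n) ℝ) (hQsymm : Q.IsSymm)
    (hQeig : ∀ i : Fin n, Q *ᵥ u i = (if (i : ℕ) < N then σ i else σ ⟨N, hNn⟩) • u i)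
    (lambar : ℝ) (hlambar : lambar = Real.sqrt (grad x ⬝ᵥ (Q⁻¹ *ᵥ grad x)))
    (t : ℝ) (ht : 0 < t) (htl : t * lambar < 1) :
    (((1 - t * lambar) ^ 2)⁻¹ • hess x - hess (x + t • -(Q⁻¹ *ᵥ grad x))).PosSemidef ∧
    (((1 - t * lambar) ^ 2)⁻¹ • (hess x)⁻¹
        - (hess (x + t • -(Q⁻¹ *ᵥ grad x)))⁻¹).PosSemidef := by
  have hquad : ∀ y v, fderiv ℝ (fderiv ℝ f) y v v = v ⬝ᵥ (hess y *ᵥ v) := fun y v => by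
    rw [← hhessq, iteratedDeriv_two_line hf]
    simp
  have hpos : ∀ y v, v ≠ 0 → 0 < fderiv ℝ (fderiv ℝ f) y v v := fun y v hv => by
    rw [hquad]
    simpa using (hhpd y).dotProduct_mulVec_pos hv
  have hsc' : ∀ y v, |fderiv ℝ (fderiv ℝ (fderiv ℝ f)) y v v v| ≤
      2 * √(fderiv ℝ (fderiv ℝ f) y v v) ^ 3 := fun y v => by
    have h := hsc y v 0
    rw [iteratedDeriv_three_line hf, iteratedDeriv_two_line hf] at h
    simp only [zero_smul, add_zero] at h
    rwa [Real.rpow_div_two_eq_sqrt, Real.rpow_ofNat] at h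
    rcases eq_or_ne v 0 with rfl | hv
    · simp
    · exact (hpos y v hv).le
  have hle : ∀ v, v ⬝ᵥ (hess x *ᵥ v) ≤ v ⬝ᵥ (Q *ᵥ v) := fun v => by
    rw [dotProduct_mulVec_eq_sum hortho heig, dotProduct_mulVec_eq_sum hortho hQeig]
    refine Finset.sum_le_sum fun i _ => mul_le_mul_of_nonneg_right ?_ (sq_nonneg _)
    split_ifs with hi
    · exact le_rfl
    · exact hσmono _ _ (not_lt.1 hi)
  have hQpd : Q.PosDef := by
    refine PosDef.of_dotProduct_mulVec_pos (by simpa [IsHermitian] using hQsymm.eq) fun v hv => ?_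
    exact (by simpa using (hhpd x).dotProduct_mulVec_pos hv : 0 < v ⬝ᵥ (hess x *ᵥ v)).trans_le
      (by simpa using hle v)
  have hQinv : Q *ᵥ (Q⁻¹ *ᵥ grad x) = grad x := by
    rw [mulVec_mulVec, mul_nonsing_inv _ ((isUnit_iff_isUnit_det Q).1 hQpd.isUnit), one_mulVec]
  set d := -(Q⁻¹ *ᵥ grad x) with hd
  have hr : √(fderiv ℝ (fderiv ℝ f) x d d) ≤ lambar := by
    rw [hlambar, hquad]
    refine Real.sqrt_le_sqrt ((hle d).trans_eq ?_)
    rw [hd, mulVec_neg, hQinv, neg_dotProduct_neg, dotProduct_comm]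
  have hrt : t * √(fderiv ℝ (fderiv ℝ f) x d d) ≤ t * lambar := mul_le_mul_of_nonneg_left hr ht.le
  have hb := fun v => hessian_bounds_of_selfConcordant hf hpos hsc' x d v ht.le (hrt.trans_lt htl)
  simp only [hquad] at hb hrt
  have hc : 0 < (1 - t * lambar) ^ 2 := pow_pos (by linarith) 2
  have hcle : (1 - t * lambar) ^ 2 ≤ (1 - t * √(d ⬝ᵥ (hess x *ᵥ d))) ^ 2 :=
    pow_le_pow_left₀ (by linarith) (by linarith) 2
  generalize (1 - t * lambar) ^ 2 = c at hc hcle ⊢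
  have hnn : ∀ y v, 0 ≤ v ⬝ᵥ (hess y *ᵥ v) := fun y v => by
    simpa using (hhpd y).posSemidef.dotProduct_mulVec_nonneg v
  have hinvsymm : ∀ y, (hess y)⁻¹.IsSymm := fun y => by
    rw [IsSymm, transpose_nonsing_inv, (hhsymm y).eq]
  constructor
  · refine posSemidef_sub_iff_dotProduct_le (hhsymm _) ((hhsymm _).smul _) fun v => ?_
    rw [smul_mulVec, dotProduct_smul, smul_eq_mul, le_inv_mul_iff₀ hc, mul_comm]
    exact (mul_le_mul_of_nonneg_left hcle (hnn _ _)).trans (hb v).1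
  · refine posSemidef_sub_iff_dotProduct_le (hinvsymm _) ((hinvsymm _).smul _) fun v => ?_
    have hinv : (c • hess x)⁻¹ = c⁻¹ • (hess x)⁻¹ := by
      have := inv_smul' (A := hess x) (Units.mk0 c hc.ne')
        ((isUnit_iff_isUnit_det _).1 (hhpd x).isUnit)
      simpa [Units.smul_def] using this
    rw [← hinv]
    refine dotProduct_inv_mulVec_le ((hhpd x).smul hc) (hhpd _) (fun w => ?_) v
    rw [smul_mulVec, dotProduct_smul, smul_eq_mul]
    exact (mul_le_mul_of_nonneg_right hcle (hnn _ _)).trans (hb w).2
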